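/- Let ρ₀ satisfy the stated first-order equation with limits a and b at ∓∞, and fix α with 0 < α < min{√2(b² − a²)a, √2(b² − a²)b}. Then there exists C > 0 such that 0 < b² − ρ₀(z)² ≤ C e^{−αz} for all z ≥ 0 and 0 < ρ₀(z)² − a² ≤ C e^{αz} for all z ≤ 0; moreover, for every integer l ≥ 1 there exists C_l > 0 such that the l-th derivative satisfies |ρ₀^{(l)}(z)| ≤ C_l e^{−α|z|} for all z ∈ ℝ. -/

import Mathlib

open Filter

/-!
Near an equilibrium `q` of `y' = F y` the linearization controls `⟪y - q, F y⟫ ≤ β ‖y - q‖ ^ 2`, so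
Grönwall's inequality for `‖y - q‖ ^ 2` bounds a solution converging to `q` by a multiple of
`exp (β z)`; every observable `G ∘ y` with `G` differentiable at `q` and `G q = 0` inherits the
bound. The two estimates on squares are the observables `b ^ 2 - x ^ 2` and `x ^ 2 - a ^ 2`. Each
derivative of `y` is again an observable, which vanishes at the zeros of `F`, so it decays at both
ends. The thresholds for `α` are the slopes `F' a = √2 (b ^ 2 - a ^ 2) a` and
`-F' b = √2 (b ^ 2 - a ^ 2) b`.
-/

open Set Asymptotics
open scoped Topology ContDiff RealInnerProductSpace

section Growth

variable {E H : Type*} [NormedAddCommGroup E] [NormedAddCommGroup H]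

theorem isBigO_principal_Ici_of_isBigO_atTop {X : Type*} [TopologicalSpace X] [LinearOrder X]
    [CompactIccSpace X] {f : X → E} {g : X → H} (hf : Continuous f) (hg : Continuous g)
    (hg₀ : ∀ x, g x ≠ 0) (h : f =O[atTop] g) (c : X) : f =O[𝓟 (Ici c)] g := by
  obtain ⟨C, hC⟩ := h.bound
  have : Nonempty X := ⟨c⟩
  obtain ⟨Z, hZ⟩ := eventually_atTop.1 hC
  have h_compact : f =O[𝓟 (Icc c Z)] g :=
    (hf.continuousOn.isBigO_principal isCompact_Icc (c := (1 : ℝ)) (by simp)).trans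
      (hg.continuousOn.isBigO_rev_principal isCompact_Icc (fun x _ ↦ hg₀ x) 1)
  have h_tail : f =O[𝓟 (Ici Z)] g := isBigO_principal.2 ⟨C, hZ⟩
  have h_cover : Ici c ⊆ Icc c Z ∪ Ici Z := fun x hx ↦ (le_total x Z).imp (⟨hx, ·⟩) id
  exact (h_compact.sup h_tail).mono (by rwa [sup_principal, principal_mono])

theorem isBigO_top_exp_mul_abs {f : ℝ → E} {β : ℝ}
    (h_left : f =O[𝓟 (Iic 0)] fun z ↦ Real.exp (-β * z))
    (h_right : f =O[𝓟 (Ici 0)] fun z ↦ Real.exp (β * z)) :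
    f =O[⊤] fun z ↦ Real.exp (β * |z|) := by
  rw [← principal_univ, ← Iic_union_Ici (a := (0 : ℝ)), ← sup_principal]
  refine (h_left.congr' .rfl ?_).sup (h_right.congr' .rfl ?_)
  · filter_upwards [mem_principal_self _] with z hz
    rw [abs_of_nonpos hz, mul_neg, neg_mul]
  · filter_upwards [mem_principal_self _] with z hz
    rw [abs_of_nonneg hz]

theorem exists_pos_forall_norm_le_of_isBigO_principal {X : Type*} {s t : Set X} {f₁ f₂ : X → E}
    {g₁ g₂ : X → H} (h₁ : f₁ =O[𝓟 s] g₁) (h₂ : f₂ =O[𝓟 t] g₂) :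
    ∃ C > 0, (∀ x ∈ s, ‖f₁ x‖ ≤ C * ‖g₁ x‖) ∧ ∀ x ∈ t, ‖f₂ x‖ ≤ C * ‖g₂ x‖ := by
  obtain ⟨C₁, hC₁, h₁⟩ := h₁.exists_pos
  obtain ⟨C₂, -, h₂⟩ := h₂.exists_pos
  exact ⟨max C₁ C₂, lt_max_of_lt_left hC₁, isBigOWith_principal.1 (h₁.weaken (le_max_left _ _)),
    isBigOWith_principal.1 (h₂.weaken (le_max_right _ _))⟩

end Growth

section Equilibrium

variable {E H : Type*} [NormedAddCommGroup E] [InnerProductSpace ℝ E]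
  [NormedAddCommGroup H] [NormedSpace ℝ H]
  {F : E → E} {F' : E →L[ℝ] E} {G : E → H} {y : ℝ → E} {p q : E} {R β : ℝ}

theorem isBigO_exp_of_inner_deriv_le {u u' : ℝ → E} (hu : ∀ z, HasDerivAt u (u' z) z)
    (h : ∀ᶠ z in atTop, ⟪u z, u' z⟫ ≤ β * ‖u z‖ ^ 2) :
    u =O[atTop] fun z ↦ Real.exp (β * z) := by
  obtain ⟨Z, hZ⟩ := eventually_atTop.1 h
  have h_deriv z : HasDerivAt (‖u ·‖ ^ 2) (2 * ⟪u z, u' z⟫) z := (hu z).norm_sq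
  have h_sq z (hz : Z ≤ z) : ‖u z‖ ^ 2 ≤ ‖u Z‖ ^ 2 * Real.exp (2 * β * (z - Z)) := by
    rw [← gronwallBound_ε0]
    refine le_gronwallBound_of_liminf_deriv_right_le
      (fun x _ ↦ (h_deriv x).continuousAt.continuousWithinAt)
      (fun x _ _ hr ↦ (h_deriv x).hasDerivWithinAt.liminf_right_slope_le hr) le_rfl
      (fun x hx ↦ ?_) z ⟨hz, le_rfl⟩
    linarith [hZ x hx.1]
  refine IsBigO.of_bound (‖u Z‖ * Real.exp (-β * Z)) ?_
  filter_upwards [eventually_ge_atTop Z] with z hz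
  refine le_of_sq_le_sq ((h_sq z hz).trans_eq ?_) (by positivity)
  rw [Real.norm_of_nonneg (Real.exp_pos _).le, mul_assoc ‖u Z‖, ← Real.exp_add, mul_pow,
    ← Real.exp_nat_mul]
  congr 2
  push_cast
  ring

theorem eventually_inner_sub_le_of_hasFDerivAt (hF : HasFDerivAt F F' q) (hFq : F q = 0)
    (hF' : ∀ v, ⟪v, F' v⟫ ≤ R * ‖v‖ ^ 2) (hR : R < β) :
    ∀ᶠ x in 𝓝 q, ⟪x - q, F x⟫ ≤ β * ‖x - q‖ ^ 2 := by
  filter_upwards [hF.isLittleO.def (sub_pos.2 hR)] with x hx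
  rw [hFq, sub_zero] at hx
  calc ⟪x - q, F x⟫ = ⟪x - q, F' (x - q)⟫ + ⟪x - q, F x - F' (x - q)⟫ := by
        rw [← inner_add_right, add_sub_cancel]
    _ ≤ R * ‖x - q‖ ^ 2 + ‖x - q‖ * ((β - R) * ‖x - q‖) := by
        gcongr
        · exact hF' _
        · exact (real_inner_le_norm _ _).trans (by gcongr)
    _ = β * ‖x - q‖ ^ 2 := by ring

theorem isBigO_exp_Ici_of_tendsto_atTop (hF : HasFDerivAt F F' q) (hFq : F q = 0)
    (hF' : ∀ v, ⟪v, F' v⟫ ≤ R * ‖v‖ ^ 2) (hR : R < β) (hy : ∀ z, HasDerivAt y (F (y z)) z)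
    (hlim : Tendsto y atTop (𝓝 q)) (hG : Continuous G) (hGd : DifferentiableAt ℝ G q)
    (hGq : G q = 0) (c : ℝ) :
    (G ∘ y) =O[𝓟 (Ici c)] fun z ↦ Real.exp (β * z) := by
  have hy_cont : Continuous y := continuous_iff_continuousAt.2 fun z ↦ (hy z).continuousAt
  have h_sub : (y · - q) =O[atTop] fun z ↦ Real.exp (β * z) :=
    isBigO_exp_of_inner_deriv_le (fun z ↦ (hy z).sub_const q)
      (hlim.eventually (eventually_inner_sub_le_of_hasFDerivAt hF hFq hF' hR))
  have h_obs : (G ∘ y) =O[atTop] (y · - q) := by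
    simpa only [hGq, sub_zero, Function.comp_def] using hGd.isBigO_sub.comp_tendsto hlim
  exact isBigO_principal_Ici_of_isBigO_atTop (hG.comp hy_cont) (by fun_prop)
    (fun _ ↦ Real.exp_ne_zero _) (h_obs.trans h_sub) c

theorem isBigO_exp_Iic_of_tendsto_atBot (hF : HasFDerivAt F F' p) (hFp : F p = 0)
    (hF' : ∀ v, R * ‖v‖ ^ 2 ≤ ⟪v, F' v⟫) (hR : β < R) (hy : ∀ z, HasDerivAt y (F (y z)) z)
    (hlim : Tendsto y atBot (𝓝 p)) (hG : Continuous G) (hGd : DifferentiableAt ℝ G p)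
    (hGp : G p = 0) (c : ℝ) :
    (G ∘ y) =O[𝓟 (Iic c)] fun z ↦ Real.exp (β * z) := by
  have hy_neg z : HasDerivAt (fun z ↦ y (-z)) (-F (y (-z))) z := by
    simpa [Function.comp_def] using (hy (-z)).scomp z (hasDerivAt_neg z)
  have h_reflected : (G ∘ fun z ↦ y (-z)) =O[𝓟 (Ici (-c))] fun z ↦ Real.exp (-β * z) :=
    isBigO_exp_Ici_of_tendsto_atTop (F := -F) (R := -R) hF.neg (by simp [hFp])
      (fun v ↦ by simpa using hF' v) (neg_lt_neg hR) hy_neg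
      (hlim.comp tendsto_neg_atTop_atBot) hG hGd hGp (-c)
  have h_neg : Tendsto (fun z : ℝ ↦ -z) (𝓟 (Iic c)) (𝓟 (Ici (-c))) :=
    tendsto_principal_principal.2 fun _ ↦ neg_le_neg (α := ℝ)
  simpa [Function.comp_def] using h_reflected.comp_tendsto h_neg

end Equilibrium

theorem exists_contDiff_iteratedDeriv_succ_eq_comp {𝕜 E : Type*} [NontriviallyNormedField 𝕜]
    [NormedAddCommGroup E] [NormedSpace 𝕜 E] {F : E → E} {y : 𝕜 → E} (hF : ContDiff 𝕜 ∞ F)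
    (hy : ∀ z, HasDerivAt y (F (y z)) z) (n : ℕ) :
    ∃ G : E → E, ContDiff 𝕜 ∞ G ∧ (∀ p, F p = 0 → G p = 0) ∧ iteratedDeriv (n + 1) y = G ∘ y := by
  induction n with
  | zero => exact ⟨F, hF, fun _ ↦ id, by ext z; simp [iteratedDeriv_one, (hy z).deriv]⟩
  | succ n ih =>
    obtain ⟨G, hG, -, hGy⟩ := ih
    refine ⟨fun x ↦ fderiv 𝕜 G x (F x), (hG.fderiv_right le_rfl).clm_apply hF,
      fun p hp ↦ by simp [hp], funext fun z ↦ ?_⟩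
    rw [iteratedDeriv_succ, hGy]
    exact ((hG.differentiable (by simp) (y z)).hasFDerivAt.comp_hasDerivAt z (hy z)).deriv

theorem iteratedDeriv_succ_isBigO_exp_mul_abs {E : Type*} [NormedAddCommGroup E]
    [InnerProductSpace ℝ E] {F : E → E} {y : ℝ → E} {p q : E} {Fp' Fq' : E →L[ℝ] E}
    {Rp Rq α : ℝ} (hF : ContDiff ℝ ∞ F) (hy : ∀ z, HasDerivAt y (F (y z)) z)
    (hFp : HasFDerivAt F Fp' p) (hp : F p = 0) (hFp' : ∀ v, Rp * ‖v‖ ^ 2 ≤ ⟪v, Fp' v⟫)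
    (hRp : α < Rp) (hbot : Tendsto y atBot (𝓝 p))
    (hFq : HasFDerivAt F Fq' q) (hq : F q = 0) (hFq' : ∀ v, ⟪v, Fq' v⟫ ≤ Rq * ‖v‖ ^ 2)
    (hRq : Rq < -α) (htop : Tendsto y atTop (𝓝 q)) (n : ℕ) :
    iteratedDeriv (n + 1) y =O[⊤] fun z ↦ Real.exp (-α * |z|) := by
  obtain ⟨G, hG, hG₀, hGy⟩ := exists_contDiff_iteratedDeriv_succ_eq_comp hF hy n
  have hGd : Differentiable ℝ G := hG.differentiable (by simp)
  rw [hGy]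
  refine isBigO_top_exp_mul_abs ?_ ?_
  · rw [neg_neg]
    exact isBigO_exp_Iic_of_tendsto_atBot hFp hp hFp' hRp hy hbot hG.continuous (hGd p) (hG₀ p hp) 0
  · exact isBigO_exp_Ici_of_tendsto_atTop hFq hq hFq' hRq hy htop hG.continuous (hGd q) (hG₀ q hq) 0

theorem inner_toSpanSingleton_self (c v : ℝ) :
    ⟪v, ContinuousLinearMap.toSpanSingleton ℝ c v⟫ = c * ‖v‖ ^ 2 := by
  rw [ContinuousLinearMap.toSpanSingleton_apply, smul_eq_mul, mul_comm, ← smul_eq_mul,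
    real_inner_smul_right, real_inner_self_eq_norm_sq]

section Profile

variable (a b : ℝ)

/-- The scalar vector field whose flow `y' = profileField a b y` has the heteroclinic profile `ρ₀`
as a trajectory from `a` to `b`. -/
noncomputable def profileField (x : ℝ) : ℝ :=
  Real.sqrt 2 / 2 * (x ^ 2 - a ^ 2) * (b ^ 2 - x ^ 2)

theorem contDiff_profileField : ContDiff ℝ ∞ (profileField a b) := by
  unfold profileField
  fun_prop

theorem profileField_left : profileField a b a = 0 := by simp [profileField]

theorem profileField_right : profileField a b b = 0 := by simp [profileField]

theorem hasDerivAt_profileField (x : ℝ) :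
    HasDerivAt (profileField a b) (Real.sqrt 2 * x * (a ^ 2 + b ^ 2 - 2 * x ^ 2)) x := by
  have h_sq := hasDerivAt_pow 2 x
  refine (((h_sq.sub_const (a ^ 2)).const_mul (Real.sqrt 2 / 2)).mul
    (h_sq.const_sub (b ^ 2))).congr_deriv ?_
  push_cast
  ring

theorem hasDerivAt_profileField_left :
    HasDerivAt (profileField a b) (Real.sqrt 2 * (b ^ 2 - a ^ 2) * a) a :=
  (hasDerivAt_profileField a b a).congr_deriv (by ring)

theorem hasDerivAt_profileField_right :
    HasDerivAt (profileField a b) (-(Real.sqrt 2 * (b ^ 2 - a ^ 2) * b)) b :=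
  (hasDerivAt_profileField a b b).congr_deriv (by ring)

variable {a b} {α : ℝ} {ρ : ℝ → ℝ}

theorem isBigO_Ici_sub_sq_of_profileField (hρ : ∀ z, HasDerivAt ρ (profileField a b (ρ z)) z)
    (htop : Tendsto ρ atTop (𝓝 b)) (hα : α < Real.sqrt 2 * (b ^ 2 - a ^ 2) * b) (c : ℝ) :
    (fun z ↦ b ^ 2 - ρ z ^ 2) =O[𝓟 (Ici c)] fun z ↦ Real.exp (-α * z) :=
  isBigO_exp_Ici_of_tendsto_atTop (G := fun x ↦ b ^ 2 - x ^ 2)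
    (hasDerivAt_profileField_right a b).hasFDerivAt (profileField_right a b)
    (fun v ↦ (inner_toSpanSingleton_self _ v).le) (neg_lt_neg hα) hρ htop
    (by fun_prop) (by fun_prop) (sub_self _) c

theorem isBigO_Iic_sq_sub_of_profileField (hρ : ∀ z, HasDerivAt ρ (profileField a b (ρ z)) z)
    (hbot : Tendsto ρ atBot (𝓝 a)) (hα : α < Real.sqrt 2 * (b ^ 2 - a ^ 2) * a) (c : ℝ) :
    (fun z ↦ ρ z ^ 2 - a ^ 2) =O[𝓟 (Iic c)] fun z ↦ Real.exp (α * z) :=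
  isBigO_exp_Iic_of_tendsto_atBot (G := fun x ↦ x ^ 2 - a ^ 2)
    (hasDerivAt_profileField_left a b).hasFDerivAt (profileField_left a b)
    (fun v ↦ (inner_toSpanSingleton_self _ v).ge) hα hρ hbot
    (by fun_prop) (by fun_prop) (sub_self _) c

theorem iteratedDeriv_succ_isBigO_of_profileField
    (hρ : ∀ z, HasDerivAt ρ (profileField a b (ρ z)) z)
    (hbot : Tendsto ρ atBot (𝓝 a)) (htop : Tendsto ρ atTop (𝓝 b))
    (hα_left : α < Real.sqrt 2 * (b ^ 2 - a ^ 2) * a)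
    (hα_right : α < Real.sqrt 2 * (b ^ 2 - a ^ 2) * b) (n : ℕ) :
    iteratedDeriv (n + 1) ρ =O[⊤] fun z ↦ Real.exp (-α * |z|) :=
  iteratedDeriv_succ_isBigO_exp_mul_abs (contDiff_profileField a b) hρ
    (hasDerivAt_profileField_left a b).hasFDerivAt (profileField_left a b)
    (fun v ↦ (inner_toSpanSingleton_self _ v).ge) hα_left hbot
    (hasDerivAt_profileField_right a b).hasFDerivAt (profileField_right a b)
    (fun v ↦ (inner_toSpanSingleton_self _ v).le) (neg_lt_neg hα_right) htop n

end Profile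

/-- Exponential decay estimates for the heteroclinic profile: with
`0 < α < min{√2(b² − a²)a, √2(b² − a²)b}`, there is `C > 0` with
`0 < b² − ρ₀(z)² ≤ C e^{−αz}` for `z ≥ 0` and `0 < ρ₀(z)² − a² ≤ C e^{αz}` for `z ≤ 0`;
and for every `l ≥ 1` there is `C_l > 0` with `|ρ₀^{(l)}(z)| ≤ C_l e^{−α|z|}` on `ℝ`. -/
theorem statement7 (a b α : ℝ) (ha : 0 < a) (hab : a < b)
    (hα : 0 < α)
    (hα' : α < min (Real.sqrt 2 * (b ^ 2 - a ^ 2) * a) (Real.sqrt 2 * (b ^ 2 - a ^ 2) * b))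
    (ρ₀ : ℝ → ℝ) (hreg : ContDiff ℝ 1 ρ₀)
    (hderiv : ∀ z, deriv ρ₀ z =
      Real.sqrt 2 / 2 * ((ρ₀ z) ^ 2 - a ^ 2) * (b ^ 2 - (ρ₀ z) ^ 2))
    (hbnd : ∀ z, a < ρ₀ z ∧ ρ₀ z < b)
    (hbot : Tendsto ρ₀ atBot (nhds a))
    (htop : Tendsto ρ₀ atTop (nhds b)) :
    (∃ C > 0,
      (∀ z : ℝ, 0 ≤ z →
        0 < b ^ 2 - (ρ₀ z) ^ 2 ∧ b ^ 2 - (ρ₀ z) ^ 2 ≤ C * Real.exp (-α * z)) ∧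
      (∀ z : ℝ, z ≤ 0 →
        0 < (ρ₀ z) ^ 2 - a ^ 2 ∧ (ρ₀ z) ^ 2 - a ^ 2 ≤ C * Real.exp (α * z))) ∧
    (∀ l : ℕ, 1 ≤ l → ∃ Cl > 0, ∀ z : ℝ,
      |iteratedDeriv l ρ₀ z| ≤ Cl * Real.exp (-α * |z|)) := by
  have hρ z : HasDerivAt ρ₀ (profileField a b (ρ₀ z)) z :=
    (hreg.differentiable one_ne_zero z).hasDerivAt.congr_deriv (hderiv z)
  obtain ⟨hα_left, hα_right⟩ := lt_min_iff.1 hα'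
  constructor
  · obtain ⟨C, hC, h_right, h_left⟩ := exists_pos_forall_norm_le_of_isBigO_principal
      (isBigO_Ici_sub_sq_of_profileField hρ htop hα_right 0)
      (isBigO_Iic_sq_sub_of_profileField hρ hbot hα_left 0)
    simp only [Real.norm_eq_abs, Real.abs_exp] at h_right h_left
    have h_pos_right z : 0 < b ^ 2 - ρ₀ z ^ 2 :=
      sub_pos.2 (pow_lt_pow_left₀ (hbnd z).2 (ha.trans (hbnd z).1).le two_ne_zero)
    have h_pos_left z : 0 < ρ₀ z ^ 2 - a ^ 2 :=
      sub_pos.2 (pow_lt_pow_left₀ (hbnd z).1 ha.le two_ne_zero)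
    exact ⟨C, hC, fun z hz ↦ ⟨h_pos_right z, (le_abs_self _).trans (h_right z hz)⟩,
      fun z hz ↦ ⟨h_pos_left z, (le_abs_self _).trans (h_left z hz)⟩⟩
  · intro l hl
    obtain ⟨n, rfl⟩ := Nat.exists_eq_add_of_le' hl
    obtain ⟨C, hC, h⟩ :=
      (iteratedDeriv_succ_isBigO_of_profileField hρ hbot htop hα_left hα_right n).exists_pos
    exact ⟨C, hC, fun z ↦ by simpa using isBigOWith_top.1 h z⟩
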